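/- Let (A,D(A)) be a linear operator on a complex Banach space X such that Σ_{π/2+δ} ⊆ ρ(A) for δ = arctan(1/C) with C ≥ 1, and such that for some M ≥ 1 the resolvent satisfies ‖μ R(μ,A)‖ ≤ √(C²+M²)/(1−q) for all q ∈ (0,1) and all μ ∈ ℂ with |arg μ| ≤ π/2 + arctan(q/C). For z ∈ Σ_δ define T(z) := (1/2πi)∫_γ e^{μz} R(μ,A) dμ, where γ is the positively oriented boundary of Σ_{π/2+arctan(q̃/C)} ∖ {μ : |μ| < 1/|z|} for any q̃ ∈ (0,1) with arctan(q̃/C) > |arg z| (by Cauchy's integral theorem the integral is independent of this choice). Then each T(z) is a well-defined bounded linear operator on X, and there is a universal constant c > 0 such that ‖T(z)‖ ≤ c · (√(C²+M²)/(1−u)) · (1 + log(C/(1−u))) whenever u ∈ (0,1) and |arg z| ≤ arctan(u/C). -/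

import Mathlib

open Filter Topology MeasureTheory

universe u

/-- `R` is the resolvent of `A` (with domain `dom`) at `lam`. -/
def IsResolventAt {X : Type u} [NormedAddCommGroup X] [NormedSpace ℂ X]
    (dom : Set X) (A : X → X) (lam : ℂ) (R : X →L[ℂ] X) : Prop :=
  (∀ y : X, R y ∈ dom) ∧ (∀ y : X, lam • R y - A (R y) = y) ∧
    ∀ x ∈ dom, R (lam • x - A x) = x

/-!
Let `R` be the resolvent and `‖μ R(μ)‖ ≤ K/(1 - q)` for `|arg μ| ≤ π/2 + arctan (q/C)`. By Cauchy's
theorem the Hankel integral of `e^{μz} R(μ)` does not depend on the angle of the contour, so the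
norm may be estimated with the angle `φ = π/2 + arctan (q/C)`, `q = (1 + u)/2`. As `q` is halfway
between `u` and `1`, the bound for `μ R(μ)` on the contour only doubles, to `2K/(1 - u)`, while `φ`
exceeds `π/2 + |arg z|` by an angle of sine at least `s = (1 - u)/(4C)`. On the arc `|e^{μz}| ≤ e`.
On a ray `|e^{μz}| ≤ e^{-s|z|r} ≤ 1/(1 + s|z|r)`, and `∫ dr / (r (1 + s|z|r))` over `r > 1/|z|` is
exactly `log (1 + 1/s)`, which is the source of the logarithm.
-/

section HankelContour

open Complex Set
open scoped Real Interval

/-- The open sector of half-angle `α` about the positive real axis, with its vertex removed. -/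
def sector (α : ℝ) : Set ℂ := {μ | μ ≠ 0 ∧ |μ.arg| < α}

lemma isOpen_sector {α : ℝ} (hα : α ≤ π) : IsOpen (sector α) := by
  have hinter : sector α = slitPlane ∩ (fun μ => |μ.arg|) ⁻¹' Iio α := by
    ext μ
    simp only [sector, mem_ofPred_eq, mem_inter_iff, mem_slitPlane_iff_arg, mem_preimage, mem_Iio]
    refine ⟨fun ⟨h0, h⟩ => ⟨⟨fun harg => ?_, h0⟩, h⟩, fun ⟨⟨_, h0⟩, h⟩ => ⟨h0, h⟩⟩
    rw [harg, abs_of_pos Real.pi_pos] at h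
    exact h.not_ge hα
  rw [hinter]
  exact ContinuousOn.isOpen_inter_preimage
    (fun μ hμ => (continuousAt_arg hμ).abs.continuousWithinAt) isOpen_slitPlane isOpen_Iio

lemma ofReal_mul_exp_mul_I_ne_zero {r : ℝ} (hr : 0 < r) (θ : ℝ) : (r : ℂ) * exp (θ * I) ≠ 0 :=
  mul_ne_zero (ofReal_ne_zero.2 hr.ne') (exp_ne_zero _)

lemma arg_ofReal_mul_exp_mul_I {r θ : ℝ} (hr : 0 < r) (hθ : |θ| < π) :
    ((r : ℂ) * exp (θ * I)).arg = θ := by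
  rw [exp_mul_I]
  exact arg_mul_cos_add_sin_mul_I hr ⟨(abs_lt.1 hθ).1, (abs_lt.1 hθ).2.le⟩

lemma ofReal_mul_exp_mul_I_mem_sector {r θ α : ℝ} (hr : 0 < r) (hα : α ≤ π) (hθ : |θ| < α) :
    (r : ℂ) * exp (θ * I) ∈ sector α := by
  refine ⟨ofReal_mul_exp_mul_I_ne_zero hr θ, ?_⟩
  rwa [arg_ofReal_mul_exp_mul_I hr (hθ.trans_le hα)]

variable {E : Type*} [NormedAddCommGroup E] [NormedSpace ℂ E] {g : ℂ → E}

/-- The line element `g dμ` pulled back along the ray `μ = r e^{iθ}`, as a function of `r`. -/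
noncomputable def rayIntegrand (g : ℂ → E) (θ r : ℝ) : E :=
  exp (θ * I) • g (r * exp (θ * I))

/-- The line element `g dμ` pulled back along the circle `μ = r e^{iθ}`, as a function of `θ`. -/
noncomputable def arcIntegrand (g : ℂ → E) (r θ : ℝ) : E :=
  (I * r * exp (θ * I)) • g (r * exp (θ * I))

/-- The integral of `g` along the outgoing ray of direction `e^{iθ}` starting at radius `r₀`. -/
noncomputable def rayIntegral (g : ℂ → E) (θ r₀ : ℝ) : E := ∫ r in Ioi r₀, rayIntegrand g θ r

/-- The integral of `g` along the arc of radius `r` from angle `a` to angle `b`. -/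
noncomputable def arcIntegral (g : ℂ → E) (r a b : ℝ) : E := ∫ θ in a..b, arcIntegrand g r θ

/-- The integral of `g` along the Hankel contour with radius `r₀` and angle `φ`: inwards along the
ray of angle `-φ`, along the arc of radius `r₀`, and outwards along the ray of angle `φ`. -/
noncomputable def hankelIntegral (g : ℂ → E) (r₀ φ : ℝ) : E :=
  arcIntegral g r₀ (-φ) φ + rayIntegral g φ r₀ - rayIntegral g (-φ) r₀

/-- Absolute convergence of the integral of `g` along each piece of the Hankel contour. -/
def HankelIntegrable (g : ℂ → E) (r₀ φ : ℝ) : Prop :=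
  IntervalIntegrable (arcIntegrand g r₀) volume (-φ) φ ∧
    IntegrableOn (rayIntegrand g φ) (Ioi r₀) ∧ IntegrableOn (rayIntegrand g (-φ)) (Ioi r₀)

lemma norm_rayIntegrand (g : ℂ → E) (θ r : ℝ) :
    ‖rayIntegrand g θ r‖ = ‖g (r * exp (θ * I))‖ := by
  rw [rayIntegrand, norm_smul, norm_exp_ofReal_mul_I, one_mul]

lemma norm_arcIntegrand (g : ℂ → E) {r : ℝ} (hr : 0 ≤ r) (θ : ℝ) :
    ‖arcIntegrand g r θ‖ = r * ‖g (r * exp (θ * I))‖ := by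
  rw [arcIntegrand, norm_smul, norm_mul, norm_mul, norm_I, norm_exp_ofReal_mul_I, one_mul, mul_one,
    norm_real, Real.norm_of_nonneg hr]

lemma continuousOn_rayIntegrand {s : Set ℝ} {θ : ℝ}
    (hg : ∀ r ∈ s, ContinuousAt g (r * exp (θ * I))) : ContinuousOn (rayIntegrand g θ) s := by
  intro r hr
  have hpath : ContinuousAt (fun r : ℝ => (r : ℂ) * exp (θ * I)) r := by fun_prop
  have hcomp : ContinuousAt (fun r : ℝ => g (r * exp (θ * I))) r := (hg r hr).comp_of_eq hpath rfl
  exact (hcomp.const_smul _).continuousWithinAt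

lemma continuousOn_arcIntegrand {s : Set ℝ} {r : ℝ}
    (hg : ∀ θ ∈ s, ContinuousAt g (r * exp (θ * I))) : ContinuousOn (arcIntegrand g r) s := by
  intro θ hθ
  have hpath : ContinuousAt (fun θ : ℝ => (r : ℂ) * exp (θ * I)) θ := by fun_prop
  have hcomp : ContinuousAt (fun θ : ℝ => g (r * exp (θ * I))) θ := (hg θ hθ).comp_of_eq hpath rfl
  have hspeed : ContinuousAt (fun θ : ℝ => I * r * exp (θ * I)) θ := by fun_prop
  exact (hspeed.smul hcomp).continuousWithinAt

lemma norm_arcIntegral_le {r a b B : ℝ} (hr : 0 ≤ r)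
    (hg : ∀ θ ∈ Ι a b, r * ‖g (r * exp (θ * I))‖ ≤ B) : ‖arcIntegral g r a b‖ ≤ B * |b - a| :=
  intervalIntegral.norm_integral_le_of_norm_le_const fun θ hθ =>
    (norm_arcIntegrand g hr θ).trans_le (hg θ hθ)

lemma tendsto_arcIntegral_zero {a b : ℝ} {ε : ℝ → ℝ} (hε : Tendsto ε atTop (𝓝 0))
    (hg : ∀ᶠ r : ℝ in atTop, ∀ θ ∈ Ι a b, r * ‖g (r * exp (θ * I))‖ ≤ ε r) :
    Tendsto (fun r => arcIntegral g r a b) atTop (𝓝 0) := by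
  refine squeeze_zero_norm' ?_ (by simpa only [zero_mul] using hε.mul_const |b - a|)
  filter_upwards [hg, eventually_ge_atTop 0] with r hgr hr
  exact norm_arcIntegral_le hr hgr

lemma integral_exp_smul_comp_exp {θ r₁ r₂ : ℝ} (hr₁ : 0 < r₁) (hr₂ : 0 < r₂)
    (hg : ∀ r ∈ [[r₁, r₂]], ContinuousAt g (r * exp (θ * I))) :
    ∫ x in Real.log r₁..Real.log r₂, exp (x + θ * I) • g (exp (x + θ * I)) =
      ∫ r in r₁..r₂, rayIntegrand g θ r := by
  have himage : Real.exp '' [[Real.log r₁, Real.log r₂]] ⊆ [[r₁, r₂]] := by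
    simpa only [Real.exp_log, hr₁, hr₂] using
      Real.exp_monotone.image_uIcc_subset (a := Real.log r₁) (b := Real.log r₂)
  have hsubst := intervalIntegral.integral_deriv_smul_comp' (fun x _ => Real.hasDerivAt_exp x)
    Real.continuous_exp.continuousOn ((continuousOn_rayIntegrand hg).mono himage)
  rw [Real.exp_log hr₁, Real.exp_log hr₂] at hsubst
  rw [← hsubst]
  refine intervalIntegral.integral_congr fun x _ => ?_
  simp only [rayIntegrand, Function.comp_apply, exp_add, ofReal_exp, mul_smul, ← coe_smul]

lemma integral_boundary_annularSector_eq_zero {a b r₁ r₂ : ℝ} (hr₁ : 0 < r₁) (hr₂ : 0 < r₂)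
    (hg : ∀ r ∈ [[r₁, r₂]], ∀ θ ∈ [[a, b]], DifferentiableAt ℂ g (r * exp (θ * I))) :
    (∫ r in r₁..r₂, rayIntegrand g a r) - (∫ r in r₁..r₂, rayIntegrand g b r) +
      arcIntegral g r₂ a b - arcIntegral g r₁ a b = 0 := by
  -- The exponential maps a rectangle onto the annular sector and sends `dw` to `dμ / μ`.
  set h : ℂ → E := fun w => exp w • g (exp w) with hh
  have harc : ∀ r : ℝ, 0 < r →
      I • ∫ θ in a..b, h (Real.log r + θ * I) = arcIntegral g r a b := by
    intro r hr
    rw [arcIntegral, ← intervalIntegral.integral_smul]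
    refine intervalIntegral.integral_congr fun θ _ => ?_
    simp only [hh, arcIntegrand, exp_add, ← ofReal_exp, Real.exp_log hr, smul_smul, mul_assoc]
  have hray : ∀ θ ∈ [[a, b]], ∫ x in Real.log r₁..Real.log r₂, h (x + θ * I) =
      ∫ r in r₁..r₂, rayIntegrand g θ r := fun θ hθ =>
    integral_exp_smul_comp_exp hr₁ hr₂ fun r hr => (hg r hr θ hθ).continuousAt
  have hdiff : DifferentiableOn ℂ h ([[Real.log r₁, Real.log r₂]] ×ℂ [[a, b]]) := by
    intro w ⟨hre, him⟩
    have hmem : Real.exp w.re ∈ [[r₁, r₂]] := by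
      simpa only [Real.exp_log, hr₁, hr₂] using
        Real.exp_monotone.image_uIcc_subset (mem_image_of_mem _ hre)
    have hgw : DifferentiableAt ℂ g (exp w) := by
      have := hg _ hmem _ him
      rwa [ofReal_exp, ← exp_add, re_add_im] at this
    exact (differentiableAt_exp.smul (hgw.comp w differentiableAt_exp)).differentiableWithinAt
  have hrect := integral_boundary_rect_eq_zero_of_differentiableOn h
    ⟨Real.log r₁, a⟩ ⟨Real.log r₂, b⟩ hdiff
  simpa only [harc r₁ hr₁, harc r₂ hr₂, hray a left_mem_uIcc, hray b right_mem_uIcc] using hrect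

lemma arcIntegral_add_rayIntegral {a b r₀ : ℝ} (hr₀ : 0 < r₀)
    (hg : ∀ r : ℝ, r₀ ≤ r → ∀ θ ∈ [[a, b]], DifferentiableAt ℂ g (r * exp (θ * I)))
    (harc : Tendsto (fun r => arcIntegral g r a b) atTop (𝓝 0))
    (ha : IntegrableOn (rayIntegrand g a) (Ioi r₀))
    (hb : IntegrableOn (rayIntegrand g b) (Ioi r₀)) :
    arcIntegral g r₀ a b + rayIntegral g b r₀ = rayIntegral g a r₀ := by
  have hlim := ((intervalIntegral_tendsto_integral_Ioi r₀ ha tendsto_id).sub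
    (intervalIntegral_tendsto_integral_Ioi r₀ hb tendsto_id)).add harc |>.sub_const
      (arcIntegral g r₀ a b)
  have hzero : rayIntegral g a r₀ - rayIntegral g b r₀ + 0 - arcIntegral g r₀ a b = 0 := by
    refine tendsto_nhds_unique_of_eventuallyEq hlim tendsto_const_nhds ?_
    filter_upwards [eventually_ge_atTop r₀] with r hr
    refine integral_boundary_annularSector_eq_zero hr₀ (hr₀.trans_le hr) fun s hs => hg s ?_
    exact (uIcc_of_le hr ▸ hs : s ∈ Icc r₀ r).1
  rw [add_zero, sub_sub, sub_eq_zero] at hzero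
  rw [hzero, add_comm]

lemma arcIntegral_neg_self_eq_add {r φ₁ φ₂ : ℝ} (hφ₁ : 0 < φ₁) (hle : φ₁ ≤ φ₂)
    (hg : IntervalIntegrable (arcIntegrand g r) volume (-φ₂) φ₂) :
    arcIntegral g r (-φ₂) φ₂ =
      arcIntegral g r (-φ₂) (-φ₁) + arcIntegral g r (-φ₁) φ₁ + arcIntegral g r φ₁ φ₂ := by
  have hsub : ∀ a ∈ [[-φ₂, φ₂]], ∀ b ∈ [[-φ₂, φ₂]],
      IntervalIntegrable (arcIntegrand g r) volume a b := fun a ha b hb =>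
    hg.mono_set (uIcc_subset_uIcc ha hb)
  have hneg : -φ₁ ∈ [[-φ₂, φ₂]] := by
    rw [mem_uIcc]
    exact Or.inl ⟨neg_le_neg hle, by linarith⟩
  have hpos : φ₁ ∈ [[-φ₂, φ₂]] := by
    rw [mem_uIcc]
    exact Or.inl ⟨by linarith, hle⟩
  simp only [arcIntegral]
  rw [intervalIntegral.integral_add_adjacent_intervals (hsub _ left_mem_uIcc _ hneg)
      (hsub _ hneg _ hpos),
    intervalIntegral.integral_add_adjacent_intervals (hsub _ left_mem_uIcc _ hpos)
      (hsub _ hpos _ right_mem_uIcc)]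

lemma hankelIntegral_eq_of_le {α r₀ φ₁ φ₂ : ℝ} {ε : ℝ → ℝ} (hα : α ≤ π) (hr₀ : 0 < r₀)
    (hφ₁ : 0 < φ₁) (hle : φ₁ ≤ φ₂) (hφ₂ : φ₂ < α) (hg : DifferentiableOn ℂ g (sector α))
    (hε : Tendsto ε atTop (𝓝 0))
    (hdecay : ∀ r : ℝ, 0 < r → ∀ θ : ℝ, φ₁ ≤ |θ| → |θ| ≤ φ₂ → r * ‖g (r * exp (θ * I))‖ ≤ ε r)
    (h₁ : HankelIntegrable g r₀ φ₁) (h₂ : HankelIntegrable g r₀ φ₂) :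
    hankelIntegral g r₀ φ₁ = hankelIntegral g r₀ φ₂ := by
  have hdiff : ∀ r : ℝ, 0 < r → ∀ θ : ℝ, |θ| ≤ φ₂ → DifferentiableAt ℂ g (r * exp (θ * I)) :=
    fun r hr θ hθ => hg.differentiableAt ((isOpen_sector hα).mem_nhds
      (ofReal_mul_exp_mul_I_mem_sector hr hα (hθ.trans_lt hφ₂)))
  have hdeform : ∀ a b : ℝ, (∀ θ ∈ [[a, b]], φ₁ ≤ |θ| ∧ |θ| ≤ φ₂) →
      IntegrableOn (rayIntegrand g a) (Ioi r₀) → IntegrableOn (rayIntegrand g b) (Ioi r₀) →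
      arcIntegral g r₀ a b + rayIntegral g b r₀ = rayIntegral g a r₀ := by
    intro a b hab ha hb
    refine arcIntegral_add_rayIntegral hr₀
      (fun r hr θ hθ => hdiff r (hr₀.trans_le hr) θ (hab θ hθ).2)
      (tendsto_arcIntegral_zero hε ?_) ha hb
    filter_upwards [eventually_gt_atTop 0] with r hr θ hθ
    exact hdecay r hr θ (hab θ (uIoc_subset_uIcc hθ)).1 (hab θ (uIoc_subset_uIcc hθ)).2
  have hupper : arcIntegral g r₀ φ₁ φ₂ + rayIntegral g φ₂ r₀ = rayIntegral g φ₁ r₀ := by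
    refine hdeform φ₁ φ₂ (fun θ hθ => ?_) h₁.2.1 h₂.2.1
    rw [uIcc_of_le hle] at hθ
    rwa [abs_of_pos (hφ₁.trans_le hθ.1)]
  have hlower : arcIntegral g r₀ (-φ₂) (-φ₁) + rayIntegral g (-φ₁) r₀ = rayIntegral g (-φ₂) r₀ := by
    refine hdeform (-φ₂) (-φ₁) (fun θ hθ => ?_) h₂.2.2 h₁.2.2
    rw [uIcc_of_le (neg_le_neg hle)] at hθ
    rw [abs_of_neg (by linarith [hθ.2])]
    constructor <;> linarith [hθ.1, hθ.2]
  rw [hankelIntegral, hankelIntegral, arcIntegral_neg_self_eq_add hφ₁ hle h₂.1, ← hupper, ← hlower]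
  abel

end HankelContour

section RealEstimates

open Set

lemma hasDerivAt_neg_log_inv_add {σ r : ℝ} (hσ : 0 < σ) (hr : 0 < r) :
    HasDerivAt (fun r => -Real.log (r⁻¹ + σ)) (r * (1 + σ * r))⁻¹ r := by
  refine (((hasDerivAt_inv hr.ne').add_const σ).log (by positivity)).neg.congr_deriv ?_
  field_simp

lemma tendsto_neg_log_inv_add {σ : ℝ} (hσ : 0 < σ) :
    Tendsto (fun r => -Real.log (r⁻¹ + σ)) atTop (𝓝 (-Real.log σ)) := by
  have hsum : Tendsto (fun r => r⁻¹ + σ) atTop (𝓝 σ) := by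
    simpa only [zero_add] using (tendsto_inv_atTop_zero (𝕜 := ℝ)).add_const σ
  exact (hsum.log hσ.ne').neg

lemma integrableOn_Ioi_inv_mul_one_add {σ r₀ : ℝ} (hσ : 0 < σ) (hr₀ : 0 < r₀) :
    IntegrableOn (fun r => (r * (1 + σ * r))⁻¹) (Ioi r₀) := by
  refine integrableOn_Ioi_deriv_of_nonneg'
    (fun r hr => hasDerivAt_neg_log_inv_add hσ (hr₀.trans_le hr)) (fun r hr => ?_)
    (tendsto_neg_log_inv_add hσ)
  have : 0 < r := hr₀.trans hr
  positivity

lemma integral_Ioi_inv_mul_one_add {σ r₀ : ℝ} (hσ : 0 < σ) (hr₀ : 0 < r₀) :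
    ∫ r in Ioi r₀, (r * (1 + σ * r))⁻¹ = Real.log (1 + (σ * r₀)⁻¹) := by
  rw [integral_Ioi_of_hasDerivAt_of_tendsto'
    (fun r hr => hasDerivAt_neg_log_inv_add hσ (hr₀.trans_le hr))
    (integrableOn_Ioi_inv_mul_one_add hσ hr₀) (tendsto_neg_log_inv_add hσ), neg_sub_neg,
    ← Real.log_div (by positivity) hσ.ne']
  congr 1
  field_simp
  ring

lemma exp_neg_le_inv_one_add {x : ℝ} (hx : 0 ≤ x) : Real.exp (-x) ≤ (1 + x)⁻¹ := by
  rw [Real.exp_neg, add_comm]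
  exact inv_anti₀ (by positivity) (Real.add_one_le_exp x)

lemma norm_le_mul_inv_of_mul_norm_le_exp {E : Type*} [NormedAddCommGroup E] {x : E} {r σ B : ℝ}
    (hσ : 0 ≤ σ) (hr : 0 < r) (hx : r * ‖x‖ ≤ B * Real.exp (-(σ * r))) :
    ‖x‖ ≤ B * (r * (1 + σ * r))⁻¹ := by
  have hB : 0 ≤ B :=
    nonneg_of_mul_nonneg_left ((by positivity : 0 ≤ r * ‖x‖).trans hx) (Real.exp_pos _)
  rw [mul_inv_rev, ← mul_assoc, ← div_eq_mul_inv, le_div_iff₀ hr, mul_comm]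
  exact hx.trans (by gcongr; exact exp_neg_le_inv_one_add (by positivity))

lemma cos_add_le_cos_sub_abs {θ ζ φ : ℝ} (hζ : |ζ| ≤ φ) (hφ : φ ≤ |θ|) (hπ : |θ| + |ζ| ≤ Real.pi) :
    Real.cos (θ + ζ) ≤ Real.cos (φ - |ζ|) := by
  rw [← Real.cos_abs (θ + ζ)]
  refine Real.cos_le_cos_of_nonneg_of_le_pi (sub_nonneg.2 hζ) ((abs_add_le θ ζ).trans hπ) ?_
  have := abs_sub_abs_le_abs_sub θ (-ζ)
  rw [abs_neg, sub_neg_eq_add] at this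
  linarith

lemma sin_arctan_sub_arctan (x y : ℝ) :
    Real.sin (Real.arctan x - Real.arctan y) = (x - y) / (√(1 + x ^ 2) * √(1 + y ^ 2)) := by
  rw [Real.sin_sub, Real.sin_arctan, Real.sin_arctan, Real.cos_arctan, Real.cos_arctan]
  field_simp

lemma half_sub_le_sin_arctan_sub_arctan {x y : ℝ} (hx : |x| ≤ 1) (hy : |y| ≤ 1) (hyx : y ≤ x) :
    (x - y) / 2 ≤ Real.sin (Real.arctan x - Real.arctan y) := by
  have hsq : ∀ t : ℝ, |t| ≤ 1 → 1 + t ^ 2 ≤ 2 := fun t ht => by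
    linarith [(sq_le_one_iff_abs_le_one t).2 ht]
  rw [sin_arctan_sub_arctan]
  refine div_le_div_of_nonneg_left (sub_nonneg.2 hyx) (by positivity) ?_
  calc √(1 + x ^ 2) * √(1 + y ^ 2) ≤ √2 * √2 := by
        gcongr
        exacts [hsq x hx, hsq y hy]
    _ = 2 := Real.mul_self_sqrt zero_le_two

lemma arctan_div_mem_Ioo {q C : ℝ} (hC : 1 ≤ C) (hq : q ∈ Ioo (0 : ℝ) 1) :
    Real.arctan (q / C) ∈ Ioo 0 (Real.arctan (1 / C)) := by
  have hC0 : 0 < C := zero_lt_one.trans_le hC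
  exact ⟨Real.arctan_pos.2 (div_pos hq.1 hC0),
    Real.arctan_strictMono (div_lt_div_of_pos_right hq.2 hC0)⟩

lemma arctan_one_div_le_pi_div_four {C : ℝ} (hC : 1 ≤ C) : Real.arctan (1 / C) ≤ Real.pi / 4 := by
  rw [← Real.arctan_one]
  exact Real.arctan_mono (div_le_one_of_le₀ hC (by linarith))

lemma cos_pi_div_two_add_arctan_sub_le {C u ζ : ℝ} (hC : 1 ≤ C) (hu : u ∈ Ioo (0 : ℝ) 1)
    (hζ : |ζ| ≤ Real.arctan (u / C)) :
    Real.cos (Real.pi / 2 + Real.arctan ((1 + u) / 2 / C) - |ζ|) ≤ -((1 - u) / (4 * C)) := by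
  have hC0 : 0 < C := zero_lt_one.trans_le hC
  obtain ⟨hu0, hu1⟩ := hu
  have habs : ∀ q : ℝ, 0 ≤ q → q ≤ 1 → |q / C| ≤ 1 := fun q hq0 hq1 => by
    rw [abs_of_nonneg (by positivity)]
    exact div_le_one_of_le₀ (hq1.trans hC) hC0.le
  have hsin : (1 - u) / (4 * C) ≤
      Real.sin (Real.arctan ((1 + u) / 2 / C) - Real.arctan (u / C)) := by
    refine le_of_eq_of_le ?_ (half_sub_le_sin_arctan_sub_arctan (habs _ (by linarith) (by linarith))
      (habs u hu0.le hu1.le) (div_le_div_of_nonneg_right (by linarith) hC0.le))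
    field_simp
    ring
  have hmono : Real.arctan (u / C) ≤ Real.arctan ((1 + u) / 2 / C) :=
    Real.arctan_mono (div_le_div_of_nonneg_right (by linarith) hC0.le)
  rw [add_sub_assoc, add_comm, Real.cos_add_pi_div_two, neg_le_neg_iff]
  refine hsin.trans (Real.sin_le_sin_of_le_of_le_pi_div_two ?_ ?_ (by linarith))
  · linarith [Real.pi_pos]
  · linarith [abs_nonneg ζ, Real.arctan_lt_pi_div_two ((1 + u) / 2 / C)]

lemma log_one_add_inv_le {C u : ℝ} (hC : 1 ≤ C) (hu : u ∈ Ioo (0 : ℝ) 1) :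
    Real.log (1 + ((1 - u) / (4 * C))⁻¹) ≤ 2 + Real.log (C / (1 - u)) := by
  have hu1 : 0 < 1 - u := sub_pos.2 hu.2
  have : 0 < C := zero_lt_one.trans_le hC
  have hone : 1 ≤ C / (1 - u) := (one_le_div hu1).2 (by linarith [hu.1])
  have hfive : (5 : ℝ) ≤ Real.exp 2 := by
    have : Real.exp 2 = Real.exp 1 * Real.exp 1 := by rw [← Real.exp_add]; norm_num
    nlinarith [Real.exp_one_gt_d9]
  calc Real.log (1 + ((1 - u) / (4 * C))⁻¹) ≤ Real.log (Real.exp 2 * (C / (1 - u))) := by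
        refine Real.log_le_log (by positivity) ?_
        rw [inv_div, mul_div_assoc]
        nlinarith
    _ = 2 + Real.log (C / (1 - u)) := by
        rw [Real.log_mul (by positivity) (by positivity), Real.log_exp]

end RealEstimates

section InverseLaplace

open Complex Set
open scoped Real Interval

variable {E : Type*} [NormedAddCommGroup E] [NormedSpace ℂ E]

lemma integrableOn_rayIntegrand {g : ℂ → E} {θ r₀ σ B : ℝ} (hr₀ : 0 < r₀) (hσ : 0 < σ)
    (hg : ∀ r ∈ Ioi r₀, ContinuousAt g (r * exp (θ * I)))
    (hdecay : ∀ r : ℝ, r₀ < r → r * ‖g (r * exp (θ * I))‖ ≤ B * Real.exp (-(σ * r))) :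
    IntegrableOn (rayIntegrand g θ) (Ioi r₀) := by
  refine ((integrableOn_Ioi_inv_mul_one_add hσ hr₀).const_mul B).mono'
    ((continuousOn_rayIntegrand hg).aestronglyMeasurable measurableSet_Ioi)
    (ae_restrict_of_forall_mem measurableSet_Ioi fun r hr => ?_)
  rw [norm_rayIntegrand]
  exact norm_le_mul_inv_of_mul_norm_le_exp hσ.le (hr₀.trans hr) (hdecay r hr)

lemma norm_rayIntegral_le {g : ℂ → E} {θ r₀ σ B : ℝ} (hr₀ : 0 < r₀) (hσ : 0 < σ)
    (hdecay : ∀ r : ℝ, r₀ < r → r * ‖g (r * exp (θ * I))‖ ≤ B * Real.exp (-(σ * r))) :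
    ‖rayIntegral g θ r₀‖ ≤ B * Real.log (1 + (σ * r₀)⁻¹) := by
  rw [← integral_Ioi_inv_mul_one_add hσ hr₀, ← integral_const_mul]
  refine norm_integral_le_of_norm_le ((integrableOn_Ioi_inv_mul_one_add hσ hr₀).const_mul B)
    (ae_restrict_of_forall_mem measurableSet_Ioi fun r hr => ?_)
  rw [norm_rayIntegrand]
  exact norm_le_mul_inv_of_mul_norm_le_exp hσ.le (hr₀.trans hr) (hdecay r hr)

/-- `f` decays like `B / |μ|` on the closed sector of half-angle `φ`; for a resolvent this is the
sectoriality estimate. -/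
def SectorBound (f : ℂ → E) (φ B : ℝ) : Prop :=
  ∀ μ : ℂ, μ ≠ 0 → |μ.arg| ≤ φ → ‖μ • f μ‖ ≤ B

/-- The integrand `e^{μz} f(μ)` of the inverse Laplace transform of `f` at `z`. -/
noncomputable def inverseLaplaceIntegrand (f : ℂ → E) (z μ : ℂ) : E := exp (μ * z) • f μ

variable {f : ℂ → E} {z : ℂ} {α φ B : ℝ}

lemma SectorBound.mul_norm_le (hf : SectorBound f φ B) (hφ : φ < π) {r θ : ℝ} (hr : 0 < r)
    (hθ : |θ| ≤ φ) : r * ‖f (r * exp (θ * I))‖ ≤ B := by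
  have hle := hf _ (ofReal_mul_exp_mul_I_ne_zero hr θ)
    (by rwa [arg_ofReal_mul_exp_mul_I hr (hθ.trans_lt hφ)])
  rwa [norm_smul, norm_mul, norm_exp_ofReal_mul_I, mul_one, norm_real,
    Real.norm_of_nonneg hr.le] at hle

lemma SectorBound.nonneg (hf : SectorBound f φ B) (hφ : 0 ≤ φ) : 0 ≤ B :=
  (norm_nonneg _).trans (hf 1 one_ne_zero (by simpa using hφ))

lemma norm_exp_ofReal_mul_exp_mul_I_mul (r θ : ℝ) (z : ℂ) :
    ‖exp (r * exp (θ * I) * z)‖ = Real.exp (r * ‖z‖ * Real.cos (θ + z.arg)) := by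
  have hpolar : (r : ℂ) * exp (θ * I) * z =
      ((r * ‖z‖ : ℝ) : ℂ) * exp ((θ + z.arg : ℝ) * I) := by
    conv_lhs => rw [← norm_mul_exp_arg_mul_I z]
    push_cast
    rw [add_mul, exp_add]
    ring
  rw [norm_exp, hpolar, re_ofReal_mul, exp_ofReal_mul_I_re]

lemma SectorBound.mul_norm_inverseLaplaceIntegrand_le (hf : SectorBound f φ B) (hφ : φ < π)
    {r θ : ℝ} (hr : 0 < r) (hθ : |θ| ≤ φ) :
    r * ‖inverseLaplaceIntegrand f z (r * exp (θ * I))‖ ≤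
      B * Real.exp (r * ‖z‖ * Real.cos (θ + z.arg)) := by
  rw [inverseLaplaceIntegrand, norm_smul, norm_exp_ofReal_mul_exp_mul_I_mul, mul_left_comm,
    mul_comm]
  gcongr
  exact hf.mul_norm_le hφ hr hθ

lemma SectorBound.mul_norm_inverseLaplaceIntegrand_le_exp_neg (hf : SectorBound f φ B) (hφ : φ < π)
    (hφz : φ + |z.arg| ≤ π) {ψ s : ℝ} (hψ : |z.arg| ≤ ψ) (hs : Real.cos (ψ - |z.arg|) ≤ -s)
    {r θ : ℝ} (hr : 0 < r) (hψθ : ψ ≤ |θ|) (hθ : |θ| ≤ φ) :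
    r * ‖inverseLaplaceIntegrand f z (r * exp (θ * I))‖ ≤ B * Real.exp (-(s * ‖z‖ * r)) := by
  have hB : 0 ≤ B := hf.nonneg ((abs_nonneg θ).trans hθ)
  have hcos : Real.cos (θ + z.arg) ≤ -s :=
    (cos_add_le_cos_sub_abs hψ hψθ (by linarith)).trans hs
  calc _ ≤ B * Real.exp (r * ‖z‖ * Real.cos (θ + z.arg)) :=
        hf.mul_norm_inverseLaplaceIntegrand_le hφ hr hθ
    _ ≤ B * Real.exp (r * ‖z‖ * -s) := by gcongr
    _ = B * Real.exp (-(s * ‖z‖ * r)) := by ring_nf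

lemma differentiableOn_inverseLaplaceIntegrand {U : Set ℂ} (hf : DifferentiableOn ℂ f U) (z : ℂ) :
    DifferentiableOn ℂ (inverseLaplaceIntegrand f z) U := by
  have hexp : Differentiable ℂ fun μ => exp (μ * z) := by fun_prop
  exact hexp.differentiableOn.smul hf

lemma cos_sub_abs_arg_neg (hzφ : π / 2 + |z.arg| < φ) (hφz : φ + |z.arg| ≤ π) :
    Real.cos (φ - |z.arg|) < 0 :=
  Real.cos_neg_of_pi_div_two_lt_of_lt (by linarith)
    (by linarith [abs_nonneg z.arg, Real.pi_pos])

lemma hankelIntegrable_inverseLaplaceIntegrand {r₀ : ℝ} (hα : α ≤ π)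
    (hf : DifferentiableOn ℂ f (sector α)) (hB : SectorBound f φ B) (hz : z ≠ 0) (hr₀ : 0 < r₀)
    (hzφ : π / 2 + |z.arg| < φ) (hφα : φ < α) (hφz : φ + |z.arg| ≤ π) :
    HankelIntegrable (inverseLaplaceIntegrand f z) r₀ φ := by
  have hφ : 0 < φ := by linarith [abs_nonneg z.arg, Real.pi_pos]
  have hcont : ∀ r : ℝ, 0 < r → ∀ θ : ℝ, |θ| ≤ φ →
      ContinuousAt (inverseLaplaceIntegrand f z) (r * exp (θ * I)) := fun r hr θ hθ =>
    (differentiableOn_inverseLaplaceIntegrand hf z).continuousOn.continuousAt <|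
      (isOpen_sector hα).mem_nhds <|
        ofReal_mul_exp_mul_I_mem_sector hr hα (hθ.trans_lt hφα)
  have hray : ∀ θ : ℝ, |θ| = φ →
      IntegrableOn (rayIntegrand (inverseLaplaceIntegrand f z) θ) (Ioi r₀) := fun θ hθ =>
    integrableOn_rayIntegrand hr₀
      (mul_pos (neg_pos.2 (cos_sub_abs_arg_neg hzφ hφz)) (norm_pos_iff.2 hz))
      (fun r hr => hcont r (hr₀.trans hr) θ hθ.le) fun r hr =>
        hB.mul_norm_inverseLaplaceIntegrand_le_exp_neg (hφα.trans_le hα) hφz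
          (by linarith [Real.pi_pos]) (neg_neg _).ge (hr₀.trans hr) hθ.ge hθ.le
  refine ⟨?_, hray φ (abs_of_pos hφ), hray (-φ) (by rw [abs_neg, abs_of_pos hφ])⟩
  refine (continuousOn_arcIntegrand fun θ hθ => hcont r₀ hr₀ θ ?_).intervalIntegrable
  rw [uIcc_of_le (neg_le_self hφ.le)] at hθ
  exact abs_le.2 hθ

lemma hankelIntegral_inverseLaplaceIntegrand_congr {r₀ φ₁ φ₂ B₁ B₂ : ℝ} (hα : α ≤ π)
    (hαz : α + |z.arg| ≤ π) (hf : DifferentiableOn ℂ f (sector α)) (hB₁ : SectorBound f φ₁ B₁)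
    (hB₂ : SectorBound f φ₂ B₂) (hz : z ≠ 0) (hr₀ : 0 < r₀) (hzφ₁ : π / 2 + |z.arg| < φ₁)
    (hφ₁ : φ₁ < α) (hzφ₂ : π / 2 + |z.arg| < φ₂) (hφ₂ : φ₂ < α) :
    hankelIntegral (inverseLaplaceIntegrand f z) r₀ φ₁ =
      hankelIntegral (inverseLaplaceIntegrand f z) r₀ φ₂ := by
  wlog hle : φ₁ ≤ φ₂ generalizing φ₁ φ₂ B₁ B₂
  · exact (this hB₂ hB₁ hzφ₂ hφ₂ hzφ₁ hφ₁ (le_of_not_ge hle)).symm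
  set s : ℝ := -Real.cos (φ₁ - |z.arg|)
  have hs0 : 0 < s := neg_pos.2 (cos_sub_abs_arg_neg hzφ₁ (by linarith))
  have hlim : Tendsto (fun r : ℝ => B₂ * Real.exp (-(s * ‖z‖ * r))) atTop (𝓝 0) := by
    simpa only [mul_zero, Function.comp_def, id_eq] using (Real.tendsto_exp_neg_atTop_nhds_zero.comp
      (tendsto_id.const_mul_atTop (mul_pos hs0 (norm_pos_iff.2 hz)))).const_mul B₂
  refine hankelIntegral_eq_of_le hα hr₀ (by linarith [abs_nonneg z.arg, Real.pi_pos]) hle hφ₂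
    (differentiableOn_inverseLaplaceIntegrand hf z) hlim (fun r hr θ hφθ hθ => ?_)
    (hankelIntegrable_inverseLaplaceIntegrand hα hf hB₁ hz hr₀ hzφ₁ hφ₁ (by linarith))
    (hankelIntegrable_inverseLaplaceIntegrand hα hf hB₂ hz hr₀ hzφ₂ hφ₂ (by linarith))
  exact hB₂.mul_norm_inverseLaplaceIntegrand_le_exp_neg (hφ₂.trans_le hα) (by linarith)
    (by linarith [Real.pi_pos]) (neg_neg _).ge hr hφθ hθ

lemma norm_hankelIntegral_inverseLaplaceIntegrand_le {s : ℝ} (hB : SectorBound f φ B) (hz : z ≠ 0)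
    (hφ : φ < π) (hzφ : |z.arg| ≤ φ) (hφz : φ + |z.arg| ≤ π) (hs : 0 < s)
    (hcos : Real.cos (φ - |z.arg|) ≤ -s) :
    ‖hankelIntegral (inverseLaplaceIntegrand f z) ‖z‖⁻¹ φ‖ ≤
      2 * B * (Real.exp 1 * φ + Real.log (1 + s⁻¹)) := by
  have hφ0 : 0 ≤ φ := (abs_nonneg _).trans hzφ
  have hr₀ : 0 < ‖z‖⁻¹ := inv_pos.2 (norm_pos_iff.2 hz)
  have hB0 : 0 ≤ B := hB.nonneg hφ0
  have harc : ‖arcIntegral (inverseLaplaceIntegrand f z) ‖z‖⁻¹ (-φ) φ‖ ≤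
      B * Real.exp 1 * |φ - -φ| := by
    refine norm_arcIntegral_le hr₀.le fun θ hθ => ?_
    rw [uIoc_of_le (neg_le_self hφ0)] at hθ
    refine (hB.mul_norm_inverseLaplaceIntegrand_le hφ hr₀ (abs_le.2 ⟨hθ.1.le, hθ.2⟩)).trans ?_
    rw [inv_mul_cancel₀ (norm_ne_zero_iff.2 hz), one_mul]
    gcongr
    exact Real.cos_le_one _
  have hray : ∀ θ : ℝ, |θ| = φ →
      ‖rayIntegral (inverseLaplaceIntegrand f z) θ ‖z‖⁻¹‖ ≤ B * Real.log (1 + s⁻¹) := by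
    intro θ hθ
    have hle := norm_rayIntegral_le hr₀ (mul_pos hs (norm_pos_iff.2 hz)) fun r hr =>
      hB.mul_norm_inverseLaplaceIntegrand_le_exp_neg hφ hφz hzφ hcos (hr₀.trans hr) hθ.ge hθ.le
    rwa [mul_inv_cancel_right₀ (norm_ne_zero_iff.2 hz)] at hle
  calc ‖hankelIntegral (inverseLaplaceIntegrand f z) ‖z‖⁻¹ φ‖
      ≤ B * Real.exp 1 * |φ - -φ| + B * Real.log (1 + s⁻¹) + B * Real.log (1 + s⁻¹) :=
        norm_sub_le_of_le (norm_add_le_of_le harc (hray φ (abs_of_nonneg hφ0)))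
          (hray (-φ) (by rw [abs_neg, abs_of_nonneg hφ0]))
    _ = 2 * B * (Real.exp 1 * φ + Real.log (1 + s⁻¹)) := by
        rw [sub_neg_eq_add, abs_of_nonneg (by positivity)]
        ring

end InverseLaplace

section Resolvent

variable {X : Type u} [NormedAddCommGroup X] [NormedSpace ℂ X] {dom : Set X} {A : X → X}

lemma IsResolventAt.mul_one_add_smul {l μ : ℂ} {S T : X →L[ℂ] X} (hS : IsResolventAt dom A l S)
    (hT : IsResolventAt dom A μ T) : S * (1 + (l - μ) • T) = T := by
  ext y
  have hy : y + (l - μ) • T y = l • T y - A (T y) := by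
    nth_rewrite 1 [← hT.2.1 y]
    rw [sub_smul]
    abel
  exact (congrArg S hy).trans (hS.2.2 (T y) (hT.1 y))

lemma differentiableOn_of_isResolventAt [CompleteSpace X] {R : ℂ → X →L[ℂ] X} {U : Set ℂ}
    (hU : IsOpen U) (hR : ∀ μ ∈ U, IsResolventAt dom A μ (R μ)) : DifferentiableOn ℂ R U := by
  intro μ hμ
  have hdiff : DifferentiableAt ℂ (fun l : ℂ => 1 + (l - μ) • R μ) μ := by fun_prop
  have hunit : IsUnit (1 + (μ - μ) • R μ) := by simp
  have hinv : DifferentiableAt ℂ (fun l : ℂ => R μ * Ring.inverse (1 + (l - μ) • R μ)) μ :=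
    ((differentiableAt_inverse (𝕜 := ℂ) hunit).comp μ hdiff).const_mul (R μ)
  refine (hinv.congr_of_eventuallyEq ?_).differentiableWithinAt
  filter_upwards [hU.mem_nhds hμ, hdiff.continuousAt.eventually (Units.isOpen.mem_nhds hunit)]
    with l hl hlunit
  exact Ring.eq_mul_inverse_iff_mul_eq _ _ _ hlunit |>.2 ((hR l hl).mul_one_add_smul (hR μ hμ))

end Resolvent

section Estimate

open Complex Set
open scoped Real

lemma inv_two_pi_mul_le {κ Λ φ L : ℝ} (hκ : 0 ≤ κ) (hΛ : 0 ≤ Λ) (hφ : φ ≤ 3 * π / 4)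
    (hL : L ≤ 2 + Λ) :
    (2 * π)⁻¹ * (2 * (2 * κ) * (Real.exp 1 * φ + L)) ≤ 6 * κ * (1 + Λ) := by
  have hsum : Real.exp 1 * φ + L ≤ π * (3 * (1 + Λ)) := by
    calc Real.exp 1 * φ + L ≤ Real.exp 1 * (3 * π / 4) + (2 + Λ) := by gcongr
      _ ≤ 2.72 * (3 * π / 4) + (2 + Λ) := by
          gcongr
          linarith [Real.exp_one_lt_d9]
      _ ≤ π * (3 * (1 + Λ)) := by nlinarith [Real.pi_gt_three]
  calc (2 * π)⁻¹ * (2 * (2 * κ) * (Real.exp 1 * φ + L))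
      ≤ (2 * π)⁻¹ * (2 * (2 * κ) * (π * (3 * (1 + Λ)))) := by gcongr
    _ = 6 * κ * (1 + Λ) := by
        field_simp
        ring

variable {E : Type*} [NormedAddCommGroup E] [NormedSpace ℂ E] {f : ℂ → E} {C K u : ℝ} {z : ℂ}

lemma norm_hankelIntegral_inverseLaplaceIntegrand_midpoint_le (hC : 1 ≤ C)
    (hu : u ∈ Ioo (0 : ℝ) 1) (hf : SectorBound f (π / 2 + Real.arctan ((1 + u) / 2 / C))
      (K / (1 - (1 + u) / 2))) (hz : z ≠ 0) (hzu : |z.arg| ≤ Real.arctan (u / C)) :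
    ‖(2 * (π : ℂ) * I)⁻¹ •
        hankelIntegral (inverseLaplaceIntegrand f z) ‖z‖⁻¹
          (π / 2 + Real.arctan ((1 + u) / 2 / C))‖ ≤
      6 * (K / (1 - u)) * (1 + Real.log (C / (1 - u))) := by
  have hu1 : 0 < 1 - u := sub_pos.2 hu.2
  have hq : (1 + u) / 2 ∈ Ioo (0 : ℝ) 1 := ⟨by linarith [hu.1], by linarith [hu.2]⟩
  have hB : K / (1 - (1 + u) / 2) = 2 * (K / (1 - u)) := by
    rw [show 1 - (1 + u) / 2 = (1 - u) / 2 by ring]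
    field_simp
  rw [hB] at hf
  have hδ := arctan_one_div_le_pi_div_four hC
  have harctan := arctan_div_mem_Ioo hC hq
  have hzπ : |z.arg| ≤ π / 4 := hzu.trans ((arctan_div_mem_Ioo hC hu).2.le.trans hδ)
  have hK : 0 ≤ K / (1 - u) :=
    nonneg_of_mul_nonneg_right (hf.nonneg (by linarith [harctan.1, Real.pi_pos])) two_pos
  have hΛ : 0 ≤ Real.log (C / (1 - u)) :=
    Real.log_nonneg ((one_le_div hu1).2 (by linarith [hu.1]))
  have hhankel := norm_hankelIntegral_inverseLaplaceIntegrand_le hf hz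
    (by linarith [harctan.2, Real.pi_pos]) (by linarith [harctan.1, Real.pi_pos])
    (by linarith [harctan.2]) (by positivity) (cos_pi_div_two_add_arctan_sub_le hC hu hzu)
  have hnorm : ‖(2 * (π : ℂ) * I)⁻¹‖ = (2 * π)⁻¹ := by simp [abs_of_pos Real.pi_pos]
  rw [norm_smul, hnorm]
  exact (mul_le_mul_of_nonneg_left hhankel (by positivity)).trans
    (inv_two_pi_mul_le hK hΛ (by linarith [harctan.2]) (log_one_add_inv_le hC hu))

theorem stmt1_general [CompleteSpace E] (hC : 1 ≤ C)
    (hf : DifferentiableOn ℂ f (sector (π / 2 + Real.arctan (1 / C))))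
    (hbound : ∀ q ∈ Ioo (0 : ℝ) 1, SectorBound f (π / 2 + Real.arctan (q / C)) (K / (1 - q)))
    (hz : z ≠ 0) {qt : ℝ} (hqt : qt ∈ Ioo (0 : ℝ) 1) (hzqt : |z.arg| < Real.arctan (qt / C)) :
    HankelIntegrable (inverseLaplaceIntegrand f z) ‖z‖⁻¹ (π / 2 + Real.arctan (qt / C)) ∧
      ∀ u ∈ Ioo (0 : ℝ) 1, |z.arg| ≤ Real.arctan (u / C) →
        ‖(2 * (π : ℂ) * I)⁻¹ •
            hankelIntegral (inverseLaplaceIntegrand f z) ‖z‖⁻¹ (π / 2 + Real.arctan (qt / C))‖ ≤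
          6 * (K / (1 - u)) * (1 + Real.log (C / (1 - u))) := by
  have hδ := arctan_one_div_le_pi_div_four hC
  have hα : π / 2 + Real.arctan (1 / C) ≤ π := by linarith [Real.pi_pos]
  have hqtδ := (arctan_div_mem_Ioo hC hqt).2
  have hr₀ : 0 < ‖z‖⁻¹ := inv_pos.2 (norm_pos_iff.2 hz)
  refine ⟨hankelIntegrable_inverseLaplaceIntegrand hα hf (hbound qt hqt) hz hr₀ (by linarith)
    (by linarith) (by linarith), fun u hu hzu => ?_⟩
  have hq : (1 + u) / 2 ∈ Ioo (0 : ℝ) 1 := ⟨by linarith [hu.1], by linarith [hu.2]⟩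
  have huq : Real.arctan (u / C) < Real.arctan ((1 + u) / 2 / C) :=
    Real.arctan_strictMono (div_lt_div_of_pos_right (by linarith [hu.2]) (by linarith))
  rw [hankelIntegral_inverseLaplaceIntegrand_congr hα (by linarith) hf (hbound qt hqt)
    (hbound _ hq) hz hr₀ (by linarith) (by linarith) (by linarith)
    (by linarith [(arctan_div_mem_Ioo hC hq).2])]
  exact norm_hankelIntegral_inverseLaplaceIntegrand_midpoint_le hC hu (hbound _ hq) hz hzu

end Estimate

/-- Quantitative construction of the holomorphic semigroup via the Cauchy
integral: there is a universal constant `c > 0` such that if the resolvent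
`R μ` of `A` exists on the sector `|arg μ| < π/2 + arctan (1/C)` and satisfies
`‖μ R μ‖ ≤ √(C² + M²)/(1-q)` on each subsector `|arg μ| ≤ π/2 + arctan (q/C)`,
then for each `z ≠ 0` with `|arg z| < arctan (1/C)` and any admissible contour
parameter `q̃`, the three pieces (circular arc in the sector of radius `1/|z|`
and the two rays) of the contour integral `(2πi)⁻¹ ∫_γ e^{μz} R(μ) dμ`
converge, and the resulting operator `T z` satisfies
`‖T z‖ ≤ c · (√(C² + M²)/(1-u)) · (1 + log (C/(1-u)))` whenever `u ∈ (0,1)`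
and `|arg z| ≤ arctan (u/C)`. -/
theorem stmt1 :
    ∃ c : ℝ, 0 < c ∧
      ∀ (X : Type u) [NormedAddCommGroup X] [NormedSpace ℂ X] [CompleteSpace X]
        (C M : ℝ), 1 ≤ C → 1 ≤ M →
      ∀ (dom : Set X) (A : X → X) (R : ℂ → X →L[ℂ] X),
      (∀ μ : ℂ, μ ≠ 0 → |μ.arg| < Real.pi / 2 + Real.arctan (1 / C) →
        IsResolventAt dom A μ (R μ)) →
      (∀ q : ℝ, q ∈ Set.Ioo (0 : ℝ) 1 → ∀ μ : ℂ, μ ≠ 0 →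
        |μ.arg| ≤ Real.pi / 2 + Real.arctan (q / C) →
        ‖μ • R μ‖ ≤ Real.sqrt (C ^ 2 + M ^ 2) / (1 - q)) →
      ∀ z : ℂ, z ≠ 0 → |z.arg| < Real.arctan (1 / C) →
      ∀ qt : ℝ, qt ∈ Set.Ioo (0 : ℝ) 1 → |z.arg| < Real.arctan (qt / C) →
      let φ : ℝ := Real.pi / 2 + Real.arctan (qt / C)
      let r₀ : ℝ := ‖z‖⁻¹
      let F : ℂ → X →L[ℂ] X := fun μ => Complex.exp (μ * z) • R μ
      (IntervalIntegrable
        (fun θ : ℝ => (Complex.I * (r₀ : ℂ) * Complex.exp ((θ : ℂ) * Complex.I)) •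
          F ((r₀ : ℂ) * Complex.exp ((θ : ℂ) * Complex.I))) volume (-φ) φ) ∧
      (IntegrableOn
        (fun r : ℝ => Complex.exp ((φ : ℂ) * Complex.I) •
          F ((r : ℂ) * Complex.exp ((φ : ℂ) * Complex.I))) (Set.Ioi r₀) volume) ∧
      (IntegrableOn
        (fun r : ℝ => Complex.exp (-(φ : ℂ) * Complex.I) •
          F ((r : ℂ) * Complex.exp (-(φ : ℂ) * Complex.I))) (Set.Ioi r₀) volume) ∧
      ∀ u : ℝ, u ∈ Set.Ioo (0 : ℝ) 1 → |z.arg| ≤ Real.arctan (u / C) →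
        ‖(2 * (Real.pi : ℂ) * Complex.I)⁻¹ •
            ((∫ θ : ℝ in (-φ)..φ,
                (Complex.I * (r₀ : ℂ) * Complex.exp ((θ : ℂ) * Complex.I)) •
                  F ((r₀ : ℂ) * Complex.exp ((θ : ℂ) * Complex.I))) +
              (∫ r : ℝ in Set.Ioi r₀, Complex.exp ((φ : ℂ) * Complex.I) •
                F ((r : ℂ) * Complex.exp ((φ : ℂ) * Complex.I))) -
              ∫ r : ℝ in Set.Ioi r₀, Complex.exp (-(φ : ℂ) * Complex.I) •
                F ((r : ℂ) * Complex.exp (-(φ : ℂ) * Complex.I)))‖ ≤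
          c * (Real.sqrt (C ^ 2 + M ^ 2) / (1 - u)) * (1 + Real.log (C / (1 - u))) := by
  refine ⟨6, by norm_num, fun X _ _ _ C M hC _ dom A R hres hbound z hz _ qt hqt hzqt => ?_⟩
  have hα : Real.pi / 2 + Real.arctan (1 / C) ≤ Real.pi := by
    linarith [arctan_one_div_le_pi_div_four hC, Real.pi_pos]
  have hR : DifferentiableOn ℂ R (sector (Real.pi / 2 + Real.arctan (1 / C))) :=
    differentiableOn_of_isResolventAt (isOpen_sector hα) fun μ hμ => hres μ hμ.1 hμ.2
  obtain ⟨⟨harc, hupper, hlower⟩, hle⟩ := stmt1_general hC hR hbound hz hqt hzqt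
  simp only [← Complex.ofReal_neg]
  exact ⟨harc, hupper, hlower, hle⟩
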